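/- For every z ∈ ℝ, E[W̄ f_z(W̄)] = Σᵢ₌₁ⁿ ∫_{−∞}^1 E[f_z′(W̄⁽ⁱ⁾ + t)] K̄ᵢ(t) dt + Σᵢ₌₁ⁿ E[x̄ᵢ] · E[f_z(W̄⁽ⁱ⁾)]. -/

import Mathlib

open MeasureTheory ProbabilityTheory Real

/-- The standard normal cumulative distribution function. -/
noncomputable def Phi (z : ℝ) : ℝ :=
  (Real.sqrt (2 * Real.pi))⁻¹ * ∫ u in Set.Iic z, Real.exp (-u ^ 2 / 2)

/-- The bounded solution `f_z` of the Stein equation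
`f'(w) - w f(w) = 1{w ≤ z} - Φ(z)`. -/
noncomputable def fz (z w : ℝ) : ℝ :=
  if w ≤ z then Real.sqrt (2 * Real.pi) * Real.exp (w ^ 2 / 2) * Phi w * (1 - Phi z)
  else Real.sqrt (2 * Real.pi) * Real.exp (w ^ 2 / 2) * Phi z * (1 - Phi w)

/-- The derivative `f_z'`, expressed via the Stein equation. -/
noncomputable def fz' (z w : ℝ) : ℝ :=
  w * fz z w + (if w ≤ z then 1 else 0) - Phi z

/-- The truncation `x̄ᵢ = ξᵢ 1{ξᵢ ≤ 1}`. -/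
noncomputable def xbar {Ω : Type*} {n : ℕ} (ξ : Fin n → Ω → ℝ) (i : Fin n) (ω : Ω) : ℝ :=
  if ξ i ω ≤ 1 then ξ i ω else 0

/-- `W̄ = ∑ᵢ x̄ᵢ`. -/
noncomputable def Wbar {Ω : Type*} {n : ℕ} (ξ : Fin n → Ω → ℝ) (ω : Ω) : ℝ :=
  ∑ i, xbar ξ i ω

/-- `W̄⁽ⁱ⁾ = W̄ - x̄ᵢ`. -/
noncomputable def Wbari {Ω : Type*} {n : ℕ} (ξ : Fin n → Ω → ℝ) (i : Fin n) (ω : Ω) : ℝ :=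
  Wbar ξ ω - xbar ξ i ω

/-- `K̄ᵢ(t) = E[x̄ᵢ (1{0 ≤ t ≤ x̄ᵢ} - 1{x̄ᵢ ≤ t < 0})]`. -/
noncomputable def Kbar {Ω : Type*} [MeasureSpace Ω] {n : ℕ} (ξ : Fin n → Ω → ℝ)
    (i : Fin n) (t : ℝ) : ℝ :=
  ∫ ω, xbar ξ i ω * ((if 0 ≤ t ∧ t ≤ xbar ξ i ω then (1 : ℝ) else 0)
    - (if xbar ξ i ω ≤ t ∧ t < 0 then (1 : ℝ) else 0))

/-- `β₂ = ∑ᵢ E[ξᵢ² 1{|ξᵢ| > 1}]`. -/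
noncomputable def beta2 {Ω : Type*} [MeasureSpace Ω] {n : ℕ} (ξ : Fin n → Ω → ℝ) : ℝ :=
  ∑ i, ∫ ω, (if 1 < |ξ i ω| then (ξ i ω) ^ 2 else 0)

/-- `β₃ = ∑ᵢ E[|ξᵢ|³ 1{|ξᵢ| ≤ 1}]`. -/
noncomputable def beta3 {Ω : Type*} [MeasureSpace Ω] {n : ℕ} (ξ : Fin n → Ω → ℝ) : ℝ :=
  ∑ i, ∫ ω, (if |ξ i ω| ≤ 1 then |ξ i ω| ^ 3 else 0)

/-!
For fixed `w`, the fundamental theorem of calculus writes `x * (f (w + x) - f w)` as the integral of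
`t ↦ f' (w + t)` against `x * (1{0 ≤ t ≤ x} - 1{x ≤ t < 0})`. That weight is nonnegative with total
mass `x ^ 2`, so for bounded `f'`, square-integrable `X` and `W` independent of `X`, Fubini and
independence give `E[X (f (W + X) - f W)] = ∫ E[f' (W + t)] K(t) dt`. Adding
`E[X f(W)] = E[X] E[f(W)]` and summing over the truncated summands gives the identity; the weight
vanishes for `t > 1` because the truncations are at most `1`.

For `f = f_z` the boundedness of `f_z'` reduces, through the Stein equation, to `|w| f_z(w) ≤ 1`,
which is Mills' bound on the Gaussian tails.
-/

local notation "φ" => gaussianPDFReal 0 1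

section GaussianTails

lemma hasDerivAt_gaussianPDFReal (m : ℝ) (v : NNReal) (x : ℝ) :
    HasDerivAt (gaussianPDFReal m v) (-((x - m) / v) * gaussianPDFReal m v x) x := by
  have hexponent : HasDerivAt (fun u : ℝ ↦ -(u - m) ^ 2 / (2 * v)) (-((x - m) / v)) x := by
    refine (((((hasDerivAt_id x).sub_const m).pow 2).neg).div_const (2 * (v : ℝ))).congr_deriv ?_
    rw [← mul_div_mul_left (x - m) (v : ℝ) two_ne_zero]
    simp [neg_div]
  rw [gaussianPDFReal_def]
  exact (hexponent.exp.const_mul _).congr_deriv (by ring)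

lemma continuous_gaussianPDFReal (m : ℝ) (v : NNReal) : Continuous (gaussianPDFReal m v) :=
  continuous_iff_continuousAt.2 fun x ↦ (hasDerivAt_gaussianPDFReal m v x).continuousAt

lemma integrable_mul_gaussianPDFReal : Integrable fun u ↦ u * φ u := by
  refine ((integrable_mul_exp_neg_mul_sq (b := 1 / 2) (by norm_num)).const_mul
    (√(2 * π))⁻¹).congr (ae_of_all _ fun u ↦ ?_)
  simp only [gaussianPDFReal, NNReal.coe_one, sub_zero, mul_one]
  ring_nf

lemma integral_Ioi_mul_gaussianPDFReal (w : ℝ) : ∫ u in Set.Ioi w, u * φ u = φ w := by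
  have hderiv (u : ℝ) : HasDerivAt (fun u ↦ -φ u) (u * φ u) u :=
    (hasDerivAt_gaussianPDFReal 0 1 u).neg.congr_deriv (by simp)
  have hint : Integrable fun u ↦ u * φ u := integrable_mul_gaussianPDFReal
  have hlim := tendsto_zero_of_hasDerivAt_of_integrableOn_Ioi (a := w) (fun u _ ↦ hderiv u)
    hint.integrableOn (integrable_gaussianPDFReal 0 1).neg.integrableOn
  rw [integral_Ioi_of_hasDerivAt_of_tendsto' (fun u _ ↦ hderiv u) hint.integrableOn hlim]
  simp

lemma Phi_eq_integral_gaussianPDFReal (z : ℝ) : Phi z = ∫ u in Set.Iic z, φ u := by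
  simp [Phi, gaussianPDFReal, integral_const_mul]

lemma Phi_eq_cdf (z : ℝ) : Phi z = cdf (gaussianReal 0 1) z := by
  rw [cdf_eq_real, measureReal_def, gaussianReal_apply_eq_integral 0 one_ne_zero,
    Phi_eq_integral_gaussianPDFReal,
    ENNReal.toReal_ofReal (integral_nonneg (gaussianPDFReal_nonneg 0 1))]

lemma Phi_nonneg (z : ℝ) : 0 ≤ Phi z := by
  rw [Phi_eq_cdf]
  exact cdf_nonneg _ z

lemma Phi_le_one (z : ℝ) : Phi z ≤ 1 := by
  rw [Phi_eq_cdf]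
  exact cdf_le_one _ z

lemma monotone_Phi : Monotone Phi := by
  rw [funext Phi_eq_cdf]
  exact monotone_cdf _

lemma one_sub_Phi (z : ℝ) : 1 - Phi z = ∫ u in Set.Ioi z, φ u := by
  have hφ := integrable_gaussianPDFReal 0 1
  rw [Phi_eq_integral_gaussianPDFReal, ← integral_gaussianPDFReal_eq_one 0 one_ne_zero,
    ← intervalIntegral.integral_Iic_add_Ioi (b := z) hφ.integrableOn hφ.integrableOn,
    add_sub_cancel_left]

lemma Phi_neg (z : ℝ) : Phi (-z) = 1 - Phi z := by
  rw [one_sub_Phi, Phi_eq_integral_gaussianPDFReal, ← integral_comp_neg_Ioi]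
  simp [gaussianPDFReal]

lemma hasDerivAt_Phi (z : ℝ) : HasDerivAt Phi (φ z) z := by
  have hφ := integrable_gaussianPDFReal 0 1
  have hderiv := ((continuous_gaussianPDFReal 0 1).integral_hasStrictDerivAt 0 z).hasDerivAt
  refine (hderiv.const_add (Phi 0)).congr_of_eventuallyEq (.of_forall fun w ↦ ?_)
  simp only [Phi_eq_integral_gaussianPDFReal]
  rw [← intervalIntegral.integral_Iic_sub_Iic hφ.integrableOn hφ.integrableOn, add_sub_cancel]

lemma continuous_Phi : Continuous Phi :=
  continuous_iff_continuousAt.2 fun z ↦ (hasDerivAt_Phi z).continuousAt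

lemma mul_one_sub_Phi_le_gaussianPDFReal (w : ℝ) : w * (1 - Phi w) ≤ φ w := by
  calc w * (1 - Phi w) = ∫ u in Set.Ioi w, w * φ u := by rw [one_sub_Phi, integral_const_mul]
    _ ≤ ∫ u in Set.Ioi w, u * φ u :=
      setIntegral_mono_on ((integrable_gaussianPDFReal 0 1).const_mul w).integrableOn
        integrable_mul_gaussianPDFReal.integrableOn measurableSet_Ioi fun u hu ↦
          mul_le_mul_of_nonneg_right hu.le (gaussianPDFReal_nonneg 0 1 u)
    _ = φ w := integral_Ioi_mul_gaussianPDFReal w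

lemma neg_mul_Phi_le_gaussianPDFReal (w : ℝ) : -w * Phi w ≤ φ w := by
  simpa [← Phi_neg, gaussianPDFReal] using mul_one_sub_Phi_le_gaussianPDFReal (-w)

end GaussianTails

section SteinSolution

lemma inv_gaussianPDFReal_zero_one (w : ℝ) : (φ w)⁻¹ = √(2 * π) * exp (w ^ 2 / 2) := by
  simp [gaussianPDFReal, ← exp_neg, neg_div, mul_comm]

lemma fz_eq_div_gaussianPDFReal (z w : ℝ) :
    fz z w = Phi (min w z) * (1 - Phi (max w z)) / φ w := by
  rw [div_eq_mul_inv, inv_gaussianPDFReal_zero_one, fz]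
  split_ifs with hwz
  · rw [min_eq_left hwz, max_eq_right hwz]
    ring
  · rw [min_eq_right (not_le.1 hwz).le, max_eq_left (not_le.1 hwz).le]
    ring

lemma fz_nonneg (z w : ℝ) : 0 ≤ fz z w := by
  rw [fz_eq_div_gaussianPDFReal]
  exact div_nonneg (mul_nonneg (Phi_nonneg _) (sub_nonneg.2 (Phi_le_one _)))
    (gaussianPDFReal_nonneg 0 1 w)

lemma fz_le_Phi_div (z w : ℝ) : fz z w ≤ Phi w / φ w := by
  rw [fz_eq_div_gaussianPDFReal]
  refine div_le_div_of_nonneg_right ?_ (gaussianPDFReal_nonneg 0 1 w)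
  calc Phi (min w z) * (1 - Phi (max w z)) ≤ Phi (min w z) :=
        mul_le_of_le_one_right (Phi_nonneg _) (sub_le_self _ (Phi_nonneg _))
    _ ≤ Phi w := monotone_Phi (min_le_left w z)

lemma fz_le_one_sub_Phi_div (z w : ℝ) : fz z w ≤ (1 - Phi w) / φ w := by
  rw [fz_eq_div_gaussianPDFReal]
  refine div_le_div_of_nonneg_right ?_ (gaussianPDFReal_nonneg 0 1 w)
  calc Phi (min w z) * (1 - Phi (max w z)) ≤ 1 - Phi (max w z) :=
        mul_le_of_le_one_left (sub_nonneg.2 (Phi_le_one _)) (Phi_le_one _)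
    _ ≤ 1 - Phi w := sub_le_sub_left (monotone_Phi (le_max_left w z)) 1

lemma abs_mul_fz_le_one (z w : ℝ) : |w * fz z w| ≤ 1 := by
  have hφ : 0 < φ w := gaussianPDFReal_pos 0 1 w one_ne_zero
  rw [abs_mul, abs_of_nonneg (fz_nonneg z w)]
  rcases abs_cases w with ⟨habs, hw⟩ | ⟨habs, hw⟩ <;> rw [habs]
  · calc w * fz z w ≤ w * ((1 - Phi w) / φ w) := by gcongr; exact fz_le_one_sub_Phi_div z w
      _ ≤ 1 := by
        rw [← mul_div_assoc, div_le_one hφ]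
        exact mul_one_sub_Phi_le_gaussianPDFReal w
  · calc -w * fz z w ≤ -w * (Phi w / φ w) :=
          mul_le_mul_of_nonneg_left (fz_le_Phi_div z w) (neg_pos.2 hw).le
      _ ≤ 1 := by
        rw [← mul_div_assoc, div_le_one hφ]
        exact neg_mul_Phi_le_gaussianPDFReal w

lemma abs_fz'_le_two (z w : ℝ) : |fz' z w| ≤ 2 := by
  have hindicator : |(if w ≤ z then 1 else 0) - Phi z| ≤ 1 := by
    rw [abs_le]
    split_ifs <;> constructor <;> linarith [Phi_nonneg z, Phi_le_one z]
  calc |fz' z w| = |w * fz z w + ((if w ≤ z then 1 else 0) - Phi z)| := by rw [fz', add_sub_assoc]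
    _ ≤ |w * fz z w| + |(if w ≤ z then 1 else 0) - Phi z| := abs_add_le _ _
    _ ≤ 2 := by linarith [abs_mul_fz_le_one z w]

lemma continuous_fz (z : ℝ) : Continuous (fz z) := by
  rw [funext (fz_eq_div_gaussianPDFReal z)]
  have hPhi := continuous_Phi
  have hφ := continuous_gaussianPDFReal 0 1
  exact .div (by fun_prop) hφ fun w ↦ (gaussianPDFReal_pos 0 1 w one_ne_zero).ne'

lemma measurable_fz' (z : ℝ) : Measurable (fz' z) :=
  ((measurable_id.mul (continuous_fz z).measurable).add
    (.ite measurableSet_Iic measurable_const measurable_const)).sub measurable_const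

lemma hasDerivAt_Phi_div_gaussianPDFReal (w : ℝ) :
    HasDerivAt (fun u ↦ Phi u / φ u) (1 + w * (Phi w / φ w)) w := by
  have hφ : φ w ≠ 0 := (gaussianPDFReal_pos 0 1 w one_ne_zero).ne'
  refine ((hasDerivAt_Phi w).div (hasDerivAt_gaussianPDFReal 0 1 w) hφ).congr_deriv ?_
  simp only [sub_zero, NNReal.coe_one, div_one]
  field_simp
  ring

lemma hasDerivAt_one_sub_Phi_div_gaussianPDFReal (w : ℝ) :
    HasDerivAt (fun u ↦ (1 - Phi u) / φ u) (w * ((1 - Phi w) / φ w) - 1) w := by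
  have hφ : φ w ≠ 0 := (gaussianPDFReal_pos 0 1 w one_ne_zero).ne'
  refine (((hasDerivAt_Phi w).const_sub 1).div (hasDerivAt_gaussianPDFReal 0 1 w) hφ).congr_deriv ?_
  simp only [sub_zero, NNReal.coe_one, div_one]
  field_simp
  ring

lemma hasDerivAt_fz {z w : ℝ} (hwz : w ≠ z) : HasDerivAt (fz z) (fz' z w) w := by
  rcases hwz.lt_or_gt with hlt | hgt
  · have heq : ∀ u ≤ z, fz z u = (1 - Phi z) * (Phi u / φ u) := fun u hu ↦ by
      rw [fz_eq_div_gaussianPDFReal, min_eq_left hu, max_eq_right hu]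
      ring
    refine (((hasDerivAt_Phi_div_gaussianPDFReal w).const_mul (1 - Phi z)).congr_of_eventuallyEq
      ((eventually_le_nhds hlt).mono heq)).congr_deriv ?_
    rw [fz', if_pos hlt.le, heq w hlt.le]
    ring
  · have heq : ∀ u ≥ z, fz z u = Phi z * ((1 - Phi u) / φ u) := fun u hu ↦ by
      rw [fz_eq_div_gaussianPDFReal, min_eq_right hu, max_eq_left hu]
      ring
    refine (((hasDerivAt_one_sub_Phi_div_gaussianPDFReal w).const_mul
      (Phi z)).congr_of_eventuallyEq ((eventually_ge_nhds hgt).mono heq)).congr_deriv ?_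
    rw [fz', if_neg hgt.not_ge, heq w hgt.le]
    ring

lemma integral_fz' (z a b : ℝ) : ∫ t in a..b, fz' z t = fz z b - fz z a := by
  refine integral_eq_of_hasDerivAt_off_countable (fz z) (fz' z) (Set.countable_singleton z)
    (continuous_fz z).continuousOn (fun w hw ↦ hasDerivAt_fz hw.2) ?_
  exact (intervalIntegrable_const (c := (2 : ℝ))).mono_fun (measurable_fz' z).aestronglyMeasurable
    (ae_of_all _ fun w ↦ by simpa using abs_fz'_le_two z w)

end SteinSolution

section KFunction

/-- The integrand `x (1{0 ≤ t ≤ x} - 1{x ≤ t < 0})` of the K-function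
`K(t) = E[X (1{0 ≤ t ≤ X} - 1{X ≤ t < 0})]` of a random variable `X`. Integrating `f' (w + t)`
against it in `t` yields `x (f (w + x) - f w)`. -/
noncomputable def steinK (x t : ℝ) : ℝ :=
  x * ((if 0 ≤ t ∧ t ≤ x then 1 else 0) - (if x ≤ t ∧ t < 0 then 1 else 0))

lemma steinK_nonneg (x t : ℝ) : 0 ≤ steinK x t := by
  unfold steinK
  split_ifs <;> grind

lemma steinK_eq_zero_of_lt {x t : ℝ} (ht : 0 ≤ t) (hxt : x < t) : steinK x t = 0 := by
  simp [steinK, hxt.not_ge, ht.not_gt]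

lemma measurable_steinK : Measurable (Function.uncurry steinK) := by
  refine measurable_fst.mul (.sub (.ite ?_ measurable_const measurable_const)
    (.ite ?_ measurable_const measurable_const))
  · exact (measurableSet_le measurable_const measurable_snd).inter
      (measurableSet_le measurable_snd measurable_fst)
  · exact (measurableSet_le measurable_fst measurable_snd).inter
      (measurableSet_lt measurable_snd measurable_const)

lemma steinK_ae_eq_indicator (x : ℝ) :
    steinK x =ᵐ[volume] (Set.uIoc 0 x).indicator fun _ ↦ |x| := by
  filter_upwards [compl_mem_ae_iff.2 (measure_singleton (0 : ℝ)),
    compl_mem_ae_iff.2 (measure_singleton x)] with t ht0 htx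
  rw [Set.mem_compl_singleton_iff] at ht0 htx
  simp only [steinK, Set.indicator, Set.mem_uIoc]
  rcases abs_cases x with ⟨habs, hx⟩ | ⟨habs, hx⟩ <;> rw [habs] <;> split_ifs <;> grind

lemma integrable_steinK (x : ℝ) : Integrable (steinK x) := by
  refine Integrable.congr ?_ (steinK_ae_eq_indicator x).symm
  rw [integrable_indicator_iff measurableSet_uIoc]
  exact integrableOn_const (by simp [Set.uIoc])

lemma integral_mul_steinK (g : ℝ → ℝ) (x : ℝ) :
    ∫ t, g t * steinK x t = x * ∫ t in (0 : ℝ)..x, g t := by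
  calc ∫ t, g t * steinK x t = ∫ t, (Set.uIoc 0 x).indicator (fun t ↦ |x| * g t) t := by
        refine integral_congr_ae ?_
        filter_upwards [steinK_ae_eq_indicator x] with t ht
        rw [ht, Set.indicator, Set.indicator, mul_ite, mul_zero, mul_comm]
    _ = |x| * ∫ t in Set.uIoc 0 x, g t := by
        rw [integral_indicator measurableSet_uIoc, integral_const_mul]
    _ = x * ∫ t in (0 : ℝ)..x, g t := by
        rw [intervalIntegral.intervalIntegral_eq_integral_uIoc, smul_eq_mul]
        split_ifs with hx
        · rw [abs_of_nonneg hx, one_mul]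
        · rw [abs_of_neg (not_le.1 hx), neg_one_mul, mul_neg, neg_mul]

lemma integral_steinK (x : ℝ) : ∫ t, steinK x t = x ^ 2 := by
  simpa [sq] using integral_mul_steinK (fun _ ↦ 1) x

variable {Ω : Type*} [MeasurableSpace Ω] {P : Measure Ω}

lemma integrable_prod_steinK [SFinite P] {X : Ω → ℝ} (hX : MemLp X 2 P) :
    Integrable (fun p : Ω × ℝ ↦ steinK (X p.1) p.2) (P.prod volume) := by
  have hmeas : AEStronglyMeasurable (fun p : Ω × ℝ ↦ steinK (X p.1) p.2) (P.prod volume) :=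
    (measurable_steinK.comp_aemeasurable
      (hX.1.aemeasurable.comp_fst.prodMk measurable_snd.aemeasurable)).aestronglyMeasurable
  refine (integrable_prod_iff hmeas).2 ⟨ae_of_all _ fun ω ↦ integrable_steinK (X ω), ?_⟩
  simpa only [norm_of_nonneg (steinK_nonneg _ _), integral_steinK] using hX.integrable_sq

variable {f f' : ℝ → ℝ} {C : NNReal}

lemma lipschitzWith_of_integral_eq_sub (hbound : ∀ t, |f' t| ≤ C)
    (hftc : ∀ a b, ∫ t in a..b, f' t = f b - f a) : LipschitzWith C f :=
  .of_dist_le_mul fun b a ↦ by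
    rw [Real.dist_eq, Real.dist_eq, ← hftc a b, ← Real.norm_eq_abs]
    exact intervalIntegral.norm_integral_le_of_norm_le_const fun t _ ↦ hbound t

lemma memLp_comp_of_lipschitzWith [IsFiniteMeasure P] {p : ENNReal} {Y : Ω → ℝ}
    (hf : LipschitzWith C f) (hY : MemLp Y p P) : MemLp (fun ω ↦ f (Y ω)) p P := by
  have hsub : LipschitzWith C fun y ↦ f y - f 0 := by
    simpa using hf.sub (LipschitzWith.const (f 0))
  simpa [Function.comp_def, Pi.add_def] using
    (hsub.comp_memLp (sub_self _) hY).add (memLp_const (f 0))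

theorem integral_mul_sub_eq_integral_steinK [SFinite P] {X W : Ω → ℝ} (hX : MemLp X 2 P)
    (hW : AEMeasurable W P) (hWX : IndepFun W X P) (hf' : Measurable f')
    (hbound : ∀ t, |f' t| ≤ C) (hftc : ∀ a b, ∫ t in a..b, f' t = f b - f a) :
    ∫ ω, X ω * (f (W ω + X ω) - f (W ω)) ∂P
      = ∫ t, (∫ ω, f' (W ω + t) ∂P) * ∫ ω, steinK (X ω) t ∂P := by
  have hint : Integrable (Function.uncurry fun (ω : Ω) (t : ℝ) ↦ f' (W ω + t) * steinK (X ω) t)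
      (P.prod volume) :=
    (integrable_prod_steinK hX).bdd_mul (c := C)
      (hf'.comp_aemeasurable (hW.comp_fst.add measurable_snd.aemeasurable)).aestronglyMeasurable
      (ae_of_all _ fun p ↦ hbound _)
  calc ∫ ω, X ω * (f (W ω + X ω) - f (W ω)) ∂P
      = ∫ ω, (∫ t, f' (W ω + t) * steinK (X ω) t) ∂P := by
        refine integral_congr_ae (ae_of_all _ fun ω ↦ ?_)
        simp [integral_mul_steinK, hftc]
    _ = ∫ t, (∫ ω, f' (W ω + t) * steinK (X ω) t ∂P) := integral_integral_swap hint
    _ = ∫ t, (∫ ω, f' (W ω + t) ∂P) * ∫ ω, steinK (X ω) t ∂P := by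
        refine integral_congr_ae (ae_of_all _ fun t ↦ ?_)
        have hshift : Measurable fun w ↦ f' (w + t) := by fun_prop
        have hK : Measurable fun x ↦ steinK x t := measurable_steinK.of_uncurry_right
        exact (hWX.comp hshift hK).integral_fun_mul_eq_mul_integral
          (hshift.comp_aemeasurable hW).aestronglyMeasurable
          (hK.comp_aemeasurable hX.1.aemeasurable).aestronglyMeasurable

theorem integral_mul_comp_add_eq [IsFiniteMeasure P] {X W : Ω → ℝ} (hX : MemLp X 2 P)
    (hW : MemLp W 2 P) (hWX : IndepFun W X P) (hf' : Measurable f') (hbound : ∀ t, |f' t| ≤ C)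
    (hftc : ∀ a b, ∫ t in a..b, f' t = f b - f a) :
    ∫ ω, X ω * f (W ω + X ω) ∂P
      = (∫ t, (∫ ω, f' (W ω + t) ∂P) * ∫ ω, steinK (X ω) t ∂P)
        + (∫ ω, X ω ∂P) * ∫ ω, f (W ω) ∂P := by
  have hf : LipschitzWith C f := lipschitzWith_of_integral_eq_sub hbound hftc
  have hfW : MemLp (fun ω ↦ f (W ω)) 2 P := memLp_comp_of_lipschitzWith hf hW
  have hfWX : MemLp (fun ω ↦ f (W ω + X ω)) 2 P := memLp_comp_of_lipschitzWith hf (hW.add hX)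
  have hmul : ∫ ω, X ω * f (W ω) ∂P = (∫ ω, X ω ∂P) * ∫ ω, f (W ω) ∂P :=
    (hWX.symm.comp measurable_id hf.continuous.measurable).integral_fun_mul_eq_mul_integral
      hX.1 hfW.1
  have hdiff : ∫ ω, X ω * (f (W ω + X ω) - f (W ω)) ∂P
      = ∫ ω, X ω * f (W ω + X ω) ∂P - ∫ ω, X ω * f (W ω) ∂P := by
    simp_rw [mul_sub]
    exact integral_sub (hX.integrable_mul hfWX) (hX.integrable_mul hfW)
  rw [← integral_mul_sub_eq_integral_steinK hX hW.1.aemeasurable hWX hf' hbound hftc, hdiff, hmul,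
    sub_add_cancel]

variable {ι : Type*} [Fintype ι] {X : ι → Ω → ℝ}

lemma indepFun_sum_sub (hX : ∀ i, AEMeasurable (X i) P) (hindep : iIndepFun X P) (i : ι) :
    IndepFun (fun ω ↦ ∑ j, X j ω - X i ω) (X i) P := by
  classical
  have herase : (fun ω ↦ ∑ j, X j ω - X i ω) = ∑ j ∈ Finset.univ.erase i, X j := by
    ext ω
    rw [Finset.sum_apply, Finset.sum_erase_eq_sub (Finset.mem_univ i)]
  rw [herase]
  exact hindep.indepFun_finsetSum_of_notMem₀ hX (Finset.notMem_erase i _)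

theorem integral_sum_mul_comp_sum_eq (hX : ∀ i, MemLp (X i) 2 P) (hindep : iIndepFun X P)
    (hf' : Measurable f') (hbound : ∀ t, |f' t| ≤ C)
    (hftc : ∀ a b, ∫ t in a..b, f' t = f b - f a) :
    ∫ ω, (∑ i, X i ω) * f (∑ i, X i ω) ∂P
      = ∑ i, (∫ t, (∫ ω, f' (∑ j, X j ω - X i ω + t) ∂P) * ∫ ω, steinK (X i ω) t ∂P)
        + ∑ i, (∫ ω, X i ω ∂P) * ∫ ω, f (∑ j, X j ω - X i ω) ∂P := by
  have := hindep.isProbabilityMeasure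
  have hf : LipschitzWith C f := lipschitzWith_of_integral_eq_sub hbound hftc
  have hsum : MemLp (fun ω ↦ ∑ j, X j ω) 2 P := memLp_finsetSum _ fun j _ ↦ hX j
  have hint (i : ι) : Integrable (fun ω ↦ X i ω * f (∑ j, X j ω)) P :=
    (hX i).integrable_mul (memLp_comp_of_lipschitzWith hf hsum)
  simp_rw [Finset.sum_mul]
  rw [integral_finsetSum _ fun i _ ↦ hint i, ← Finset.sum_add_distrib]
  refine Finset.sum_congr rfl fun i _ ↦ ?_
  have hrest : MemLp (fun ω ↦ ∑ j, X j ω - X i ω) 2 P := hsum.sub (hX i)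
  have hindep_rest := indepFun_sum_sub (fun i ↦ (hX i).1.aemeasurable) hindep i
  simpa only [sub_add_cancel] using
    integral_mul_comp_add_eq (hX i) hrest hindep_rest hf' hbound hftc

end KFunction

section Truncation

lemma measurable_truncation : Measurable fun x : ℝ ↦ if x ≤ 1 then x else 0 :=
  .ite measurableSet_Iic measurable_id measurable_const

variable {Ω : Type*} {n : ℕ} (ξ : Fin n → Ω → ℝ) (i : Fin n)

lemma xbar_le_one (ω : Ω) : xbar ξ i ω ≤ 1 := by
  unfold xbar
  split_ifs with h
  · exact h
  · exact zero_le_one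

lemma abs_xbar_le (ω : Ω) : |xbar ξ i ω| ≤ |ξ i ω| := by
  unfold xbar
  split_ifs <;> simp

variable {ξ i} in
lemma memLp_xbar [MeasurableSpace Ω] {P : Measure Ω} {p : ENNReal} (hξ : MemLp (ξ i) p P) :
    MemLp (xbar ξ i) p P :=
  hξ.mono (measurable_truncation.comp_aemeasurable hξ.1.aemeasurable).aestronglyMeasurable
    (ae_of_all _ (abs_xbar_le ξ i))

lemma Kbar_eq_integral_steinK [MeasureSpace Ω] (t : ℝ) :
    Kbar ξ i t = ∫ ω, steinK (xbar ξ i ω) t := rfl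

lemma Kbar_eq_zero_of_one_lt [MeasureSpace Ω] {t : ℝ} (ht : 1 < t) : Kbar ξ i t = 0 := by
  have hsteinK (ω : Ω) : steinK (xbar ξ i ω) t = 0 :=
    steinK_eq_zero_of_lt (zero_le_one.trans ht.le) ((xbar_le_one ξ i ω).trans_lt ht)
  simp [Kbar_eq_integral_steinK, hsteinK]

end Truncation

theorem wbar_fz_identity_general {Ω : Type*} [MeasureSpace Ω] {n : ℕ} (ξ : Fin n → Ω → ℝ)
    (hindep : iIndepFun ξ ℙ) (hL2 : ∀ i, MemLp (xbar ξ i) 2 ℙ) {f f' : ℝ → ℝ} {C : NNReal}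
    (hf' : Measurable f') (hbound : ∀ t, |f' t| ≤ C)
    (hftc : ∀ a b, ∫ t in a..b, f' t = f b - f a) :
    (∫ ω, Wbar ξ ω * f (Wbar ξ ω))
      = (∑ i, ∫ t in Set.Iic (1 : ℝ), (∫ ω, f' (Wbari ξ i ω + t)) * Kbar ξ i t)
        + ∑ i, (∫ ω, xbar ξ i ω) * (∫ ω, f (Wbari ξ i ω)) := by
  have hindep_xbar : iIndepFun (xbar ξ) ℙ := hindep.comp _ fun _ ↦ measurable_truncation
  have hrestrict (i : Fin n) :
      ∫ t in Set.Iic (1 : ℝ), (∫ ω, f' (Wbari ξ i ω + t)) * Kbar ξ i t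
        = ∫ t, (∫ ω, f' (Wbari ξ i ω + t)) * Kbar ξ i t :=
    setIntegral_eq_integral_of_forall_compl_eq_zero fun t ht ↦ by
      rw [Kbar_eq_zero_of_one_lt ξ i (not_le.1 ht), mul_zero]
  simp_rw [hrestrict]
  exact integral_sum_mul_comp_sum_eq hL2 hindep_xbar hf' hbound hftc

/-- Identity (4.21) for E[Wbar f_z(Wbar)]. -/
theorem wbar_fz_identity
    {Ω : Type*} [MeasureSpace Ω] [IsProbabilityMeasure (ℙ : Measure Ω)]
    {n : ℕ} (ξ : Fin n → Ω → ℝ)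
    (hmeas : ∀ i, Measurable (ξ i))
    (hindep : iIndepFun ξ ℙ)
    (hL2 : ∀ i, MemLp (ξ i) 2 ℙ)
    (hmean : ∀ i, ∫ ω, ξ i ω = 0)
    (hvar : ∑ i, ∫ ω, (ξ i ω) ^ 2 = 1)
    (z : ℝ) :
    (∫ ω, Wbar ξ ω * fz z (Wbar ξ ω))
      = (∑ i, ∫ t in Set.Iic (1 : ℝ), (∫ ω, fz' z (Wbari ξ i ω + t)) * Kbar ξ i t)
        + ∑ i, (∫ ω, xbar ξ i ω) * (∫ ω, fz z (Wbari ξ i ω)) := by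
  exact wbar_fz_identity_general ξ hindep (fun i ↦ memLp_xbar (hL2 i)) (C := 2) (measurable_fz' z)
    (abs_fz'_le_two z) (integral_fz' z)
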